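/- Let n, q, p be integers with 2 ≤ q < p ≤ n. If G is a graph of order n with no clique of order p and G has as many cliques of order q as the Turán graph T_{p−1}(n), then G is isomorphic to T_{p−1}(n). -/

import Mathlib

open SimpleGraph

/-- The number of cliques of order `q` in a graph. -/
noncomputable def numCliques {V : Type*} (G : SimpleGraph V) (q : ℕ) : ℕ :=
  {s : Finset V | G.IsNClique q s}.ncard

/-!
The argument is Zykov symmetrisation. Let `G` have the most `q`-cliques among the graphs on `V`
without an `(r + 1)`-clique. Replacing `t` by a copy of `s` creates no larger cliques, so the
`q`-cliques through `s` but not `t` are at most as numerous as those through `t`; for non-adjacent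
`s`, `t` this forces equality, and the symmetrised graph is again extremal. If moreover every edge
of `G` lies in a `q`-clique, then applying this twice makes non-adjacency transitive, the same
inequality for adjacent vertices balances the parts, and adding an edge shows that there are
`min |V| r` of them. Edges outside `q`-cliques can be deleted without changing the count; what
remains is a Turán graph, and the edge-maximality of the latter shows that nothing was deleted.
-/

section Counting

variable {V W : Type*} {G H : SimpleGraph V} {q : ℕ} {A B : Set V} {s t x y : V}

lemma numCliques_le_of_isContained [Finite W] {K : SimpleGraph W} (h : G ⊑ K) :
    numCliques G q ≤ numCliques K q := by
  obtain ⟨f⟩ := h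
  refine Set.ncard_le_ncard_of_injOn (Finset.map f.toEmbedding) (fun S hS ↦ ?_)
    (Finset.map_injective _).injOn
  exact hS.map.mono ((map_le_iff_le_comap _ _ _).2 fun _ _ ↦ f.toHom.map_adj)

/-- The number of `q`-cliques of `G` that contain `A` and avoid `B`. -/
noncomputable def numCliquesThrough (G : SimpleGraph V) (q : ℕ) (A B : Set V) : ℕ :=
  {S : Finset V | G.IsNClique q S ∧ A ⊆ S ∧ Disjoint (S : Set V) B}.ncard

lemma numCliquesThrough_empty_empty (G : SimpleGraph V) (q : ℕ) :
    numCliquesThrough G q ∅ ∅ = numCliques G q := by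
  simp [numCliquesThrough, numCliques]

lemma numCliquesThrough_pos [Finite V] :
    0 < numCliquesThrough G q A B ↔
      ∃ S : Finset V, G.IsNClique q S ∧ A ⊆ S ∧ Disjoint (S : Set V) B :=
  Set.ncard_pos

lemma numCliquesThrough_insert_add_insert [Finite V] (G : SimpleGraph V) (q : ℕ) (A B : Set V)
    (v : V) :
    numCliquesThrough G q (insert v A) B + numCliquesThrough G q A (insert v B) =
      numCliquesThrough G q A B := by
  refine Eq.trans ?_ (Set.ncard_inter_add_ncard_sdiff_eq_ncard _ {S : Finset V | v ∈ S})
  unfold numCliquesThrough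
  congr 2 <;> ext S <;>
    simp only [Set.mem_inter_iff, Set.mem_sdiff, Set.mem_ofPred_eq, Set.insert_subset_iff,
      Set.disjoint_insert_right, Finset.mem_coe] <;> tauto

lemma numCliquesThrough_union_of_not_adj {C : Set V} (hx : x ∈ A)
    (hC : ∀ c ∈ C, c ≠ x ∧ ¬G.Adj x c) :
    numCliquesThrough G q A (B ∪ C) = numCliquesThrough G q A B := by
  unfold numCliquesThrough
  congr 1 with S
  refine and_congr_right fun hS ↦ and_congr_right fun hA ↦ ?_
  rw [Set.disjoint_union_right, and_iff_left]
  exact Set.disjoint_right.2 fun c hc hcS ↦ (hC c hc).2 (hS.1 (hA hx) hcS (hC c hc).1.symm)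

lemma numCliquesThrough_singleton_of_not_adj (hst : s ≠ t) (hadj : ¬G.Adj s t) :
    numCliquesThrough G q {s} {t} = numCliquesThrough G q {s} ∅ := by
  rw [← Set.empty_union {t}]
  exact numCliquesThrough_union_of_not_adj rfl (by simp [hst.symm, hadj])

lemma numCliquesThrough_congr (h : ∀ a ∉ B, ∀ b ∉ B, (G.Adj a b ↔ H.Adj a b)) :
    numCliquesThrough G q A B = numCliquesThrough H q A B := by
  unfold numCliquesThrough
  congr 1 with S
  rw [Set.mem_ofPred_eq, Set.mem_ofPred_eq, and_congr_left_iff]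
  rintro ⟨-, hB⟩
  have hS : ∀ a ∈ S, a ∉ B := fun a ha ↦ Set.disjoint_left.1 hB ha
  simp only [isNClique_iff, IsClique, Set.Pairwise]
  refine and_congr_left fun _ ↦ forall₄_congr fun a ha b hb ↦ ?_
  rw [h a (hS a ha) b (hS b hb)]

lemma numCliquesThrough_exchange_le [Finite V] {U : Set V} (hxA : x ∉ A) (hyU : y ∈ U)
    (h : ∀ z ∉ U, G.Adj x z → G.Adj y z) :
    numCliquesThrough G q (insert x A) (U \ {x}) ≤
      numCliquesThrough G q (insert y A) (U \ {y}) := by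
  classical
  have hU {S : Finset V} (hS : Disjoint (S : Set V) (U \ {x})) {z : V} (hz : z ∈ S) (hzx : z ≠ x) :
      z ∉ U := fun hzU ↦ Set.disjoint_left.1 hS hz ⟨hzU, hzx⟩
  refine Set.ncard_le_ncard_of_injOn (fun S ↦ insert y (S.erase x)) ?_ ?_
  · rintro S ⟨hS, hA, hdisj⟩
    have hxS : x ∈ S := hA (Set.mem_insert x A)
    refine ⟨hS.insert_erase (fun z hz ↦ ?_) hxS, ?_, ?_⟩
    · obtain ⟨hzS, hzx⟩ : z ∈ S ∧ z ≠ x := by simpa using hz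
      exact h z (hU hdisj hzS hzx) (hS.1 hxS hzS hzx.symm)
    · rw [Finset.coe_insert, Finset.coe_erase]
      exact Set.insert_subset_insert
        (Set.subset_sdiff_singleton ((Set.subset_insert x A).trans hA) hxA)
    · refine Set.disjoint_left.2 fun z hz ⟨hzU, hzy⟩ ↦ ?_
      have hzS := Finset.mem_erase.1 (Finset.mem_of_mem_insert_of_ne hz hzy)
      exact hU hdisj hzS.2 hzS.1 hzU
  · refine Set.LeftInvOn.injOn (f₁' := fun T ↦ insert x (T.erase y)) fun S ⟨_, hA, hdisj⟩ ↦ ?_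
    have hy : y ∉ S.erase x := fun hy ↦
      hU hdisj (Finset.mem_erase.1 hy).2 (Finset.mem_erase.1 hy).1 hyU
    simp only [Finset.erase_insert hy, Finset.insert_erase (hA (Set.mem_insert x A))]

lemma numCliquesThrough_exchange [Finite V] {U : Set V} (hxA : x ∉ A) (hyA : y ∉ A)
    (hxU : x ∈ U) (hyU : y ∈ U) (h : ∀ z ∉ U, (G.Adj x z ↔ G.Adj y z)) :
    numCliquesThrough G q (insert x A) (U \ {x}) =
      numCliquesThrough G q (insert y A) (U \ {y}) :=
  (numCliquesThrough_exchange_le hxA hyU fun z hz ↦ (h z hz).1).antisymm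
    (numCliquesThrough_exchange_le hyA hxU fun z hz ↦ (h z hz).2)

lemma numCliquesThrough_eq_sum_add [Finite V] {P : Finset V} (hP : G.IsIndepSet P)
    (A B : Set V) :
    numCliquesThrough G q A B =
      ∑ x ∈ P, numCliquesThrough G q (insert x A) B + numCliquesThrough G q A (B ∪ P) := by
  classical
  induction P using Finset.induction_on with
  | empty => simp
  | insert x P hx ih =>
    rw [Finset.coe_insert] at hP
    have hxP : ∀ c ∈ (P : Set V), c ≠ x ∧ ¬G.Adj x c := fun c hc ↦
      have hcx : c ≠ x := fun h ↦ hx (h ▸ hc)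
      ⟨hcx, hP (Set.mem_insert x _) (Set.mem_insert_of_mem x hc) hcx.symm⟩
    rw [ih (hP.mono (Set.subset_insert x _)), Finset.sum_insert hx, Finset.coe_insert,
      Set.union_insert, ← numCliquesThrough_insert_add_insert G q A (B ∪ P) x,
      numCliquesThrough_union_of_not_adj (Set.mem_insert x A) hxP]
    ring

lemma numCliques_replaceVertex_add [Finite V] [DecidableEq V] (G : SimpleGraph V) (q : ℕ)
    (hst : s ≠ t) :
    numCliques (G.replaceVertex s t) q + numCliquesThrough G q {t} ∅ =
      numCliques G q + numCliquesThrough G q {s} {t} := by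
  have hagree (A : Set V) : numCliquesThrough (G.replaceVertex s t) q A {t} =
      numCliquesThrough G q A {t} :=
    numCliquesThrough_congr fun _ ha _ hb ↦ G.adj_replaceVertex_iff_of_ne s ha hb
  have hcopy : numCliquesThrough (G.replaceVertex s t) q {t} ∅ =
      numCliquesThrough G q {s} {t} := by
    have hnot : ¬(G.replaceVertex s t).Adj t s := fun h ↦
      G.not_adj_replaceVertex_same s t h.symm
    have htwin := numCliquesThrough_exchange (G := G.replaceVertex s t) (q := q) (A := ∅)
      (U := {s, t}) (Set.notMem_empty s) (Set.notMem_empty t) (by simp) (by simp) fun z hz ↦ by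
        have hzt : z ≠ t := fun h ↦ hz (by simp [h])
        rw [G.adj_replaceVertex_iff_of_ne_left s hzt, G.adj_replaceVertex_iff_of_ne_right s hzt]
    rw [← numCliquesThrough_singleton_of_not_adj hst.symm hnot, ← hagree]
    simpa [Set.insert_sdiff_of_notMem, hst, hst.symm] using htwin.symm
  have hG := numCliquesThrough_insert_add_insert G q ∅ ∅ t
  have hG' := numCliquesThrough_insert_add_insert (G.replaceVertex s t) q ∅ ∅ t
  simp only [insert_empty_eq, numCliquesThrough_empty_empty, hagree, hcopy] at hG hG'
  lia

lemma numCliques_lt_numCliques_sup_edge [Finite V] (hxy : x ≠ y) (hadj : ¬G.Adj x y)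
    (htwin : ∀ z, G.Adj x z → G.Adj y z) {S : Finset V} (hS : G.IsNClique q S) (hxS : x ∈ S)
    (hq : 2 ≤ q) : numCliques G q < numCliques (G ⊔ edge x y) q := by
  classical
  obtain ⟨z, hzS, hzx⟩ : ∃ z ∈ S, z ≠ x := S.exists_mem_ne (by rw [hS.2]; lia) x
  have hnew : (G ⊔ edge x y).IsNClique q (insert y (S.erase z)) := by
    refine (hS.mono le_sup_left).insert_erase (fun w hw ↦ ?_) hzS
    rcases eq_or_ne w x with rfl | hwx
    · exact Or.inr (by simp [edge_adj, hxy.symm])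
    · exact Or.inl (htwin w (hS.1 hxS (Finset.mem_sdiff.1 hw).1 hwx.symm))
  refine Set.ncard_lt_ncard ⟨fun T hT ↦ hT.mono le_sup_left, fun hsub ↦ hadj ?_⟩
  have hold : G.IsNClique q (insert y (S.erase z)) := hsub hnew
  exact hold.1 (by simp [hxS, hzx.symm]) (by simp) hxy

end Counting

section CliqueUnion

variable {V : Type*} (G : SimpleGraph V) (q : ℕ)

/-- The union of the cliques of order `q` of `G`: the subgraph of the edges lying in such a clique.
Thus `G ≤ cliqueUnion G q` says that every edge of `G` lies in a clique of order `q`. -/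
def cliqueUnion : SimpleGraph V where
  Adj a b := a ≠ b ∧ ∃ S : Finset V, G.IsNClique q S ∧ a ∈ S ∧ b ∈ S
  symm := ⟨fun _ _ ⟨hab, S, hS, ha, hb⟩ ↦ ⟨hab.symm, S, hS, hb, ha⟩⟩
  loopless := ⟨fun _ h ↦ h.1 rfl⟩

lemma cliqueUnion_le : cliqueUnion G q ≤ G := fun _ _ ⟨hab, _, hS, ha, hb⟩ ↦ hS.1 ha hb hab

lemma isNClique_cliqueUnion_iff {S : Finset V} :
    (cliqueUnion G q).IsNClique q S ↔ G.IsNClique q S :=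
  ⟨fun hS ↦ hS.mono (cliqueUnion_le G q),
    fun hS ↦ ⟨fun _ ha _ hb hab ↦ ⟨hab, S, hS, ha, hb⟩, hS.2⟩⟩

lemma numCliques_cliqueUnion : numCliques (cliqueUnion G q) q = numCliques G q := by
  simp only [numCliques, isNClique_cliqueUnion_iff]

lemma cliqueUnion_cliqueUnion : cliqueUnion (cliqueUnion G q) q = cliqueUnion G q := by
  ext a b
  exact and_congr_right fun _ ↦ exists_congr fun _ ↦ and_congr_left fun _ ↦
    isNClique_cliqueUnion_iff G q

variable {G q}

lemma numCliquesThrough_pair_pos [Finite V] (hcov : G ≤ cliqueUnion G q) {a b : V}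
    (hab : G.Adj a b) : 0 < numCliquesThrough G q {a, b} ∅ := by
  obtain ⟨-, S, hS, ha, hb⟩ := hcov hab
  exact numCliquesThrough_pos.2 ⟨S, hS, by simp [Set.insert_subset_iff, ha, hb], by simp⟩

end CliqueUnion

lemma turanGraph_min (n r : ℕ) : turanGraph n (min n r) = turanGraph n r := by
  rcases le_total r n with hr | hn
  · rw [min_eq_right hr]
  · rw [min_eq_left hn, turanGraph_eq_top.2 (.inr le_rfl), turanGraph_eq_top.2 (.inr hn)]

section CompleteMultipartite

variable {V : Type*} [Fintype V] [DecidableEq V] {G : SimpleGraph V}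
  {P : Finpartition (Finset.univ : Finset V)}

/-- `G` is the complete multipartite graph whose parts are those of the partition `P`. -/
def IsCompleteMultipartiteWith (G : SimpleGraph V) (P : Finpartition (Finset.univ : Finset V)) :
    Prop :=
  ∀ a b, G.Adj a b ↔ P.part a ≠ P.part b

lemma exists_isCompleteMultipartiteWith (hG : G.IsCompleteMultipartite) :
    ∃ P : Finpartition (Finset.univ : Finset V), IsCompleteMultipartiteWith G P := by
  classical
  let P := Finpartition.ofSetoid hG.setoid
  refine ⟨P, fun a b ↦ ?_⟩
  have hmem : b ∈ P.part a ↔ ¬G.Adj a b := Finpartition.mem_part_ofSetoid_iff_rel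
  rw [P.mem_part_iff_part_eq_part (Finset.mem_univ b) (Finset.mem_univ a)] at hmem
  rw [ne_comm, ne_eq, hmem, not_not]

namespace IsCompleteMultipartiteWith

variable (hP : IsCompleteMultipartiteWith G P)
include hP

lemma not_adj_iff_mem_part {a b : V} : ¬G.Adj a b ↔ b ∈ P.part a := by
  rw [hP a b, not_not, P.mem_part_iff_part_eq_part (Finset.mem_univ b) (Finset.mem_univ a), eq_comm]

lemma adj_iff_of_part_eq {x y : V} (hxy : P.part x = P.part y) (z : V) :
    G.Adj x z ↔ G.Adj y z := by
  rw [hP, hP, hxy]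

lemma isIndepSet_part (v : V) : G.IsIndepSet (P.part v) := fun a ha b hb _ ↦
  hP.not_adj_iff_mem_part.2 <| by
    rwa [P.part_eq_of_mem (P.part_mem.2 (Finset.mem_univ v)) ha]

lemma cliqueFree_iff {m : ℕ} : G.CliqueFree m ↔ P.parts.card < m := by
  constructor
  · contrapose!
    intro hm hfree
    obtain ⟨z, -, hz⟩ := P.exists_subset_part_bijOn
    have hclique : G.IsClique (z : Set V) := fun a ha b hb hab ↦
      (hP a b).2 fun h ↦ hab (hz.injOn ha hb h)
    have hcard : z.card = P.parts.card := Finset.card_eq_of_equiv hz.equiv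
    exact hfree.mono (hcard ▸ hm) z ⟨hclique, rfl⟩
  · intro hm
    let C : G.Coloring P.parts :=
      Coloring.mk (fun v ↦ ⟨P.part v, P.part_mem.2 (Finset.mem_univ v)⟩)
        fun {a b} hab h ↦ (hP a b).1 hab (congrArg Subtype.val h)
    exact C.colorable.cliqueFree (by simpa using hm)

lemma nonempty_iso_turanGraph (heq : P.IsEquipartition) :
    Nonempty (G ≃g turanGraph (Fintype.card V) P.parts.card) := by
  obtain ⟨f, hf⟩ := heq.exists_partPreservingEquiv
  let e : V ≃ Fin (Fintype.card V) := (Equiv.subtypeUnivEquiv Finset.mem_univ).symm.trans f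
  refine ⟨e, fun {a b} ↦ ?_⟩
  rw [hP a b, turanGraph_adj, not_iff_not]
  exact (hf ⟨a, Finset.mem_univ a⟩ ⟨b, Finset.mem_univ b⟩).symm

lemma numCliquesThrough_pair_eq_of_part_eq {v x y : V} (q : ℕ) (hvx : G.Adj v x)
    (hxy : P.part x = P.part y) :
    numCliquesThrough G q {x, v} ∅ = numCliquesThrough G q {y, v} ∅ := by
  rcases eq_or_ne x y with rfl | hne
  · rfl
  have hvy : G.Adj v y := ((hP.adj_iff_of_part_eq hxy v).1 hvx.symm).symm
  have hadj : ¬G.Adj x y := fun h ↦ (hP x y).1 h hxy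
  have hexch := numCliquesThrough_exchange (q := q) (A := {v}) (U := {x, y}) hvx.ne'
    hvy.ne' (by simp) (by simp) fun z _ ↦ hP.adj_iff_of_part_eq hxy z
  have hx := numCliquesThrough_union_of_not_adj (G := G) (q := q) (A := {x, v}) (B := ∅)
    (C := {y}) (Set.mem_insert x _) (by simp [hne.symm, hadj])
  have hy := numCliquesThrough_union_of_not_adj (G := G) (q := q) (A := {y, v}) (B := ∅)
    (C := {x}) (Set.mem_insert y _) (by simp [hne, G.adj_comm y, hadj])
  rw [← hx, ← hy]
  simpa [Set.insert_sdiff_of_notMem, hne, hne.symm] using hexch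

lemma numCliquesThrough_singleton_eq {v w : V} (q : ℕ) (hvw : G.Adj v w) :
    numCliquesThrough G q {v} ∅ = (P.part w).card * numCliquesThrough G q {v, w} ∅ +
      numCliquesThrough G q {v} ((P.part v ∪ P.part w : Set V) \ {v}) := by
  have hpair : ∀ x ∈ P.part w,
      numCliquesThrough G q {x, v} ∅ = numCliquesThrough G q {v, w} ∅ := fun x hx ↦ by
    rw [← hP.numCliquesThrough_pair_eq_of_part_eq q hvw
      (P.part_eq_of_mem (P.part_mem.2 (Finset.mem_univ w)) hx).symm, Set.pair_comm]
  have hset : (P.part v ∪ P.part w : Set V) \ {v} =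
      (P.part w : Set V) ∪ (P.part v : Set V) \ {v} := by
    have hv : v ∉ (P.part w : Set V) := fun h ↦ hP.not_adj_iff_mem_part.2 h hvw.symm
    rw [Set.union_sdiff_distrib, Set.sdiff_singleton_eq_self hv, Set.union_comm]
  have hself : ∀ c ∈ (P.part v : Set V) \ {v}, c ≠ v ∧ ¬G.Adj v c := fun c hc ↦
    ⟨hc.2, hP.not_adj_iff_mem_part.2 hc.1⟩
  rw [numCliquesThrough_eq_sum_add (hP.isIndepSet_part w), hset,
    numCliquesThrough_union_of_not_adj (Set.mem_singleton v) hself, Set.empty_union]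
  simp only [Finset.sum_congr rfl hpair, Finset.sum_const, smul_eq_mul]

end IsCompleteMultipartiteWith

end CompleteMultipartite

/-- `G` has the maximum number of cliques of order `q` among the graphs on its vertex set without a
clique of order `r + 1`; for `q = 2` this is `SimpleGraph.IsTuranMaximal`. -/
structure IsZykovMaximal {V : Type*} (G : SimpleGraph V) (q r : ℕ) : Prop where
  cliqueFree : G.CliqueFree (r + 1)
  numCliques_le : ∀ H : SimpleGraph V, H.CliqueFree (r + 1) → numCliques H q ≤ numCliques G q

lemma exists_isZykovMaximal {V : Type*} [Finite V] (q : ℕ) {r : ℕ} (hr : 0 < r) :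
    ∃ G : SimpleGraph V, IsZykovMaximal G q r := by
  obtain ⟨G, hG, hmax⟩ := Set.exists_max_image {G : SimpleGraph V | G.CliqueFree (r + 1)}
    (numCliques · q) (Set.toFinite _) ⟨⊥, cliqueFree_bot (by lia)⟩
  exact ⟨G, hG, hmax⟩

namespace IsZykovMaximal

protected lemma cliqueUnion {V : Type*} {G : SimpleGraph V} {q r : ℕ} (h : IsZykovMaximal G q r) :
    IsZykovMaximal (cliqueUnion G q) q r where
  cliqueFree := h.cliqueFree.anti (cliqueUnion_le G q)
  numCliques_le := by
    rw [numCliques_cliqueUnion]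
    exact h.numCliques_le

section Symmetrisation

variable {V : Type*} [Finite V] {G : SimpleGraph V} {q r : ℕ} {s t : V}
  (h : IsZykovMaximal G q r)
include h

lemma numCliquesThrough_le (hst : s ≠ t) :
    numCliquesThrough G q {s} {t} ≤ numCliquesThrough G q {t} ∅ := by
  classical
  have hmax := h.numCliques_le _ (h.cliqueFree.replaceVertex s t)
  have hcount := numCliques_replaceVertex_add G q hst
  lia

lemma numCliquesThrough_eq_of_not_adj (hadj : ¬G.Adj s t) :
    numCliquesThrough G q {s} ∅ = numCliquesThrough G q {t} ∅ := by
  rcases eq_or_ne s t with rfl | hst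
  · rfl
  have hle := h.numCliquesThrough_le hst
  have hge := h.numCliquesThrough_le hst.symm
  rw [numCliquesThrough_singleton_of_not_adj hst hadj] at hle
  rw [numCliquesThrough_singleton_of_not_adj hst.symm fun hts ↦ hadj hts.symm] at hge
  exact hle.antisymm hge

lemma replaceVertex [DecidableEq V] (hst : s ≠ t) (hadj : ¬G.Adj s t) :
    IsZykovMaximal (G.replaceVertex s t) q r := by
  have hcount := numCliques_replaceVertex_add G q hst
  rw [numCliquesThrough_singleton_of_not_adj hst hadj, h.numCliquesThrough_eq_of_not_adj hadj,
    add_left_inj] at hcount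
  exact ⟨h.cliqueFree.replaceVertex s t, hcount ▸ h.numCliques_le⟩

lemma isCompleteMultipartite (hcov : G ≤ cliqueUnion G q) : G.IsCompleteMultipartite := by
  classical
  refine ⟨fun t s u hts hsu htu ↦ ?_⟩
  have hst : ¬G.Adj s t := fun hst ↦ hts hst.symm
  have hne_st : s ≠ t := fun e ↦ hsu (e ▸ htu)
  have hne_ut : u ≠ t := htu.ne'
  set G' := G.replaceVertex s t
  have h' : IsZykovMaximal G' q r := h.replaceVertex hne_st hst
  have hagree (v : V) : numCliquesThrough G' q {v} {t} = numCliquesThrough G q {v} {t} :=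
    numCliquesThrough_congr fun _ ha _ hb ↦ G.adj_replaceVertex_iff_of_ne s ha hb
  have hsu' : ¬G'.Adj s u := by rwa [G.adj_replaceVertex_iff_of_ne_left s hne_ut]
  have hut' : ¬G'.Adj u t := by
    rwa [G'.adj_comm, G.adj_replaceVertex_iff_of_ne_right s hne_ut]
  have hu : numCliquesThrough G q {u} {t} = numCliquesThrough G q {u} ∅ :=
    calc numCliquesThrough G q {u} {t}
      _ = numCliquesThrough G' q {u} {t} := (hagree u).symm
      _ = numCliquesThrough G' q {u} ∅ := numCliquesThrough_singleton_of_not_adj hne_ut hut'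
      _ = numCliquesThrough G' q {s} ∅ := (h'.numCliquesThrough_eq_of_not_adj hsu').symm
      _ = numCliquesThrough G' q {s} {t} := (numCliquesThrough_singleton_of_not_adj hne_st
            (G.not_adj_replaceVertex_same s t)).symm
      _ = numCliquesThrough G q {s} {t} := hagree s
      _ = numCliquesThrough G q {s} ∅ := numCliquesThrough_singleton_of_not_adj hne_st hst
      _ = numCliquesThrough G q {u} ∅ := h.numCliquesThrough_eq_of_not_adj hsu
  have hsplit := numCliquesThrough_insert_add_insert G q {u} ∅ t
  have hpos := numCliquesThrough_pair_pos hcov htu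
  rw [insert_empty_eq] at hsplit
  lia

end Symmetrisation

section Turan

variable {V : Type*} [Fintype V] {G : SimpleGraph V} {q r : ℕ} (h : IsZykovMaximal G q r)
include h

lemma exists_isNClique (hq : 0 < q) (hqr : q ≤ r) (hqV : q ≤ Fintype.card V) :
    ∃ S, G.IsNClique q S := by
  obtain ⟨H, _, hH⟩ := exists_isTuranMaximal (V := V) hq
  obtain ⟨S, hS⟩ : ∃ S, H.IsNClique q S := by
    simpa [CliqueFree] using not_cliqueFree_of_isTuranMaximal hqV hH
  have hpos : 0 < numCliques H q := (Set.ncard_pos).2 ⟨S, hS⟩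
  exact (Set.ncard_pos).1 (hpos.trans_le (h.numCliques_le H (hH.1.mono (by lia))))

section Parts

variable [DecidableEq V] {P : Finpartition (Finset.univ : Finset V)}

lemma isEquipartition (hcov : G ≤ cliqueUnion G q) (hP : IsCompleteMultipartiteWith G P) :
    P.IsEquipartition := by
  by_contra hn
  obtain ⟨large, hl, small, hs, hlt⟩ := Finpartition.not_isEquipartition.1 hn
  obtain ⟨w, hw⟩ := P.nonempty_of_mem_parts hl
  obtain ⟨v, hv⟩ := P.nonempty_of_mem_parts hs
  obtain rfl := P.part_eq_of_mem hl hw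
  obtain rfl := P.part_eq_of_mem hs hv
  have hvw : G.Adj v w := (hP v w).2 fun e ↦ by rw [e] at hlt; lia
  have hdeg_v := hP.numCliquesThrough_singleton_eq q hvw
  have hdeg_w := hP.numCliquesThrough_singleton_eq q hvw.symm
  have hexch := numCliquesThrough_exchange (G := G) (q := q) (A := ∅)
    (U := (P.part v ∪ P.part w : Set V)) (Set.notMem_empty v) (Set.notMem_empty w) (Or.inl hv)
    (Or.inr hw) fun z hz ↦ by
      rw [Set.mem_union, not_or, Finset.mem_coe, Finset.mem_coe, ← hP.not_adj_iff_mem_part,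
        ← hP.not_adj_iff_mem_part, not_not, not_not] at hz
      exact iff_of_true hz.1 hz.2
  have hsplit := numCliquesThrough_insert_add_insert G q {v} ∅ w
  have hmax := h.numCliquesThrough_le hvw.ne
  have hpos := numCliquesThrough_pair_pos hcov hvw
  rw [Set.pair_comm w v, Set.union_comm] at hdeg_w
  rw [Set.pair_comm w v] at hsplit
  simp only [insert_empty_eq] at hexch hsplit
  have hlarge : ((P.part v).card + 1) * numCliquesThrough G q {v, w} ∅ <
      (P.part w).card * numCliquesThrough G q {v, w} ∅ := Nat.mul_lt_mul_of_pos_right hlt hpos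
  linarith

lemma exists_isNClique_mem (hcov : G ≤ cliqueUnion G q)
    (hP : IsCompleteMultipartiteWith G P) (hq : 2 ≤ q) (hqr : q ≤ r) (hqV : q ≤ Fintype.card V)
    (x : V) : ∃ S, G.IsNClique q S ∧ x ∈ S := by
  obtain ⟨S, hS⟩ := h.exists_isNClique (by lia) hqr hqV
  obtain ⟨a, ha, b, hb, hab⟩ := Finset.one_lt_card.1 (show 1 < S.card by rw [hS.2]; lia)
  obtain ⟨z, hxz⟩ : ∃ z, G.Adj x z := by
    by_contra! hx
    refine (hP a b).1 (hS.1 ha hb hab) ?_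
    have hxa := not_not.1 (mt (hP x a).2 (hx a))
    have hxb := not_not.1 (mt (hP x b).2 (hx b))
    exact hxa.symm.trans hxb
  obtain ⟨-, T, hT, hxT, -⟩ := hcov hxz
  exact ⟨T, hT, hxT⟩

lemma card_parts (hcov : G ≤ cliqueUnion G q) (hP : IsCompleteMultipartiteWith G P)
    (hq : 2 ≤ q) (hqr : q ≤ r) (hqV : q ≤ Fintype.card V) :
    P.parts.card = min (Fintype.card V) r := by
  have hle : P.parts.card ≤ r := Nat.lt_succ_iff.1 (hP.cliqueFree_iff.1 h.cliqueFree)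
  refine (le_min P.card_parts_le_card hle).antisymm ?_
  by_contra! hlt
  obtain ⟨hltV, hltr⟩ := lt_min_iff.1 hlt
  obtain ⟨x, -, y, -, hxy, hpart⟩ := Finset.exists_ne_map_eq_of_card_lt_of_maps_to
    (s := Finset.univ) (t := P.parts) hltV fun a _ ↦ P.part_mem.2 (Finset.mem_univ a)
  obtain ⟨S, hS, hxS⟩ := h.exists_isNClique_mem hcov hP hq hqr hqV x
  have hfree : (G ⊔ edge x y).CliqueFree (r + 1) := (hP.cliqueFree_iff.2 hltr).sup_edge x y
  have hadj : ¬G.Adj x y := fun hadj ↦ (hP x y).1 hadj hpart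
  have hmore : numCliques G q < numCliques (G ⊔ edge x y) q :=
    numCliques_lt_numCliques_sup_edge hxy hadj
      (fun z ↦ (hP.adj_iff_of_part_eq hpart z).1) hS hxS hq
  exact (h.numCliques_le _ hfree).not_gt hmore

end Parts

lemma nonempty_iso_turanGraph (hq : 2 ≤ q) (hqr : q ≤ r) (hqV : q ≤ Fintype.card V) :
    Nonempty (G ≃g turanGraph (Fintype.card V) r) := by
  classical
  have hcov := (cliqueUnion_cliqueUnion G q).ge
  obtain ⟨P, hP⟩ := exists_isCompleteMultipartiteWith (h.cliqueUnion.isCompleteMultipartite hcov)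
  obtain ⟨f⟩ := hP.nonempty_iso_turanGraph (h.cliqueUnion.isEquipartition hcov hP)
  rw [h.cliqueUnion.card_parts hcov hP hq hqr hqV, turanGraph_min] at f
  have hturan : (cliqueUnion G q).IsTuranMaximal r := isTuranMaximal_of_iso f (by lia)
  have hG : cliqueUnion G q = G :=
    (IsExtremal.le_iff_eq hturan h.cliqueFree).1 (cliqueUnion_le G q)
  exact ⟨hG ▸ f⟩

end Turan

end IsZykovMaximal

theorem stmt3_general (n q p : ℕ) (h2 : 2 ≤ q) (hqp : q < p) (hqn : q ≤ n)
    {V : Type*} [Fintype V] (G : SimpleGraph V) (hn : Fintype.card V = n)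
    (hfree : G.CliqueFree p)
    (hle : numCliques (turanGraph n (p - 1)) q ≤ numCliques G q) :
    Nonempty (G ≃g turanGraph n (p - 1)) := by
  subst hn
  obtain ⟨r, rfl⟩ : ∃ r, p = r + 1 := ⟨p - 1, by lia⟩
  have hqr : q ≤ r := Nat.lt_succ_iff.1 hqp
  obtain ⟨M, hM⟩ := exists_isZykovMaximal (V := V) q (show 0 < r by lia)
  obtain ⟨f⟩ := hM.nonempty_iso_turanGraph h2 hqr hqn
  have hMG : numCliques M q ≤ numCliques G q :=
    (numCliques_le_of_isContained f.isContained).trans hle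
  have hG : IsZykovMaximal G q r :=
    ⟨hfree, fun H hH ↦ (hM.numCliques_le H hH).trans hMG⟩
  exact hG.nonempty_iso_turanGraph h2 hqr hqn

theorem stmt3 (n q p : ℕ) (h2 : 2 ≤ q) (hqp : q < p) (hpn : p ≤ n)
    {V : Type*} [Fintype V] (G : SimpleGraph V) (hn : Fintype.card V = n)
    (hfree : G.CliqueFree p)
    (heq : numCliques G q = numCliques (turanGraph n (p - 1)) q) :
    Nonempty (G ≃g turanGraph n (p - 1)) :=
  stmt3_general n q p h2 hqp (hqp.le.trans hpn) G hn hfree heq.ge
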